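/- There exists an absolute constant c such that for every martingale F in the dyadic Hardy space H_{1/2}(G) and every n ≥ 1, ‖σ_n F‖_{H_{1/2}} ≤ c V(n)^2 ‖F‖_{H_{1/2}}, where σ_n is the n-th Fejér mean of the Walsh–Fourier series and V(n) is the binary variation of n. -/

import Mathlib

open MeasureTheory Filter Topology ENNReal NNReal

noncomputable section

/-- The dyadic group `G = (ℤ/2)^ℕ`. -/
abbrev G : Type := ℕ → ZMod 2

instance : TopologicalSpace (ZMod 2) := ⊥
instance : DiscreteTopology (ZMod 2) := ⟨rfl⟩
instance : MeasurableSpace G := borel G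
instance : BorelSpace G := ⟨rfl⟩

/-- Normalized Haar measure on `G`. -/
def μG : Measure G := Measure.addHaarMeasure ⟨⟨Set.univ, isCompact_univ⟩, by simp⟩

/-- Cylinder `I_n(x) = {y : y_0 = x_0, ..., y_{n-1} = x_{n-1}}`. -/
def cyl (n : ℕ) (x : G) : Set G := {y | ∀ k < n, y k = x k}

/-- `I_n = I_n(0)`. -/
def I₀ (n : ℕ) : Set G := cyl n 0

/-- `e t`: the element of `G` with a single 1 in coordinate `t`. -/
def e (t : ℕ) : G := fun k => if k = t then 1 else 0

/-- Rademacher functions `r_k(x) = (-1)^{x_k}`. -/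
def rade (k : ℕ) (x : G) : ℝ := (-1 : ℝ) ^ (x k).val

/-- Walsh functions `w_n = ∏ r_k^{n_k}` (binary digits `n_k` of `n`). -/
def walsh (n : ℕ) (x : G) : ℝ :=
  ∏ k ∈ Finset.range (n + 1), if n.testBit k then rade k x else 1

/-- Walsh–Dirichlet kernel `D_n = ∑_{k<n} w_k`. -/
def D (n : ℕ) (x : G) : ℝ := ∑ k ∈ Finset.range n, walsh k x

/-- Walsh–Fejér kernel `K_n = (1/n) ∑_{k=1}^n D_k`. -/
def K (n : ℕ) (x : G) : ℝ := (1 / n) * ∑ k ∈ Finset.Icc 1 n, D k x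

/-- Binary variation `V(n) = n_0 + ∑_{k≥1} |n_k - n_{k-1}|`. -/
def V (n : ℕ) : ℕ :=
  (if n.testBit 0 then 1 else 0) +
    ∑ k ∈ Finset.Icc 1 (n + 1), if n.testBit k ≠ n.testBit (k - 1) then 1 else 0

/-- `|n|`: index of the highest nonzero binary digit of `n`. -/
def hi (n : ℕ) : ℕ := Nat.log 2 n

/-- `[n]`: index of the lowest nonzero binary digit of `n`. -/
def lo (n : ℕ) : ℕ := padicValNat 2 n

/-- `d(n) = |n| - [n]`. -/
def dd (n : ℕ) : ℕ := hi n - lo n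

/-- A dyadic martingale: `F n` depends only on the first `n` coordinates, and
`F n` is the average of the two possible extensions, i.e. the martingale property
with respect to the dyadic filtration. -/
def IsDyadicMartingale (F : ℕ → G → ℝ) : Prop :=
  (∀ n x y, (∀ k < n, x k = y k) → F n x = F n y) ∧
  (∀ n x, F n x = (F (n+1) x + F (n+1) (Function.update x n (x n + 1))) / 2)

/-- `k`-th Walsh–Fourier coefficient of a martingale,
`F̂(k) = lim_n ∫ F_n w_k dμ` (the integrals are eventually constant). -/
def mcoeff (F : ℕ → G → ℝ) (k : ℕ) : ℝ := ∫ x, F (k+1) x * walsh k x ∂μG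

/-- Partial sums `S_m F` of the Walsh–Fourier series of a martingale. -/
def S (F : ℕ → G → ℝ) (m : ℕ) (x : G) : ℝ := ∑ j ∈ Finset.range m, mcoeff F j * walsh j x

/-- Fejér means `σ_n F = (1/n) ∑_{k=1}^n S_k F`. -/
def σ (F : ℕ → G → ℝ) (n : ℕ) (x : G) : ℝ := (1 / n) * ∑ k ∈ Finset.Icc 1 n, S F k x

/-- `H_p` quasi-norm of a martingale: `‖sup_n |F_n|‖_{L_p}`. -/
def HpNorm (p : ℝ) (F : ℕ → G → ℝ) : ℝ≥0∞ :=
  (∫⁻ x, (⨆ n, (‖F n x‖₊ : ℝ≥0∞)) ^ p ∂μG) ^ (1 / p)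

/-- Membership in the martingale Hardy space `H_p(G)`. -/
def MemHp (p : ℝ) (F : ℕ → G → ℝ) : Prop := IsDyadicMartingale F ∧ HpNorm p F < ⊤

/-- `L_p` quasi-norm of a function on `G`. -/
def LpN (p : ℝ) (f : G → ℝ) : ℝ≥0∞ := (∫⁻ x, (‖f x‖₊ : ℝ≥0∞) ^ p ∂μG) ^ (1 / p)

/-- Weak `L_p` quasi-norm: `‖f‖_{L_{p,∞}} = sup_{λ>0} λ μ(|f|>λ)^{1/p}`. -/
def wLp (p : ℝ) (f : G → ℝ) : ℝ≥0∞ :=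
  ⨆ t : ℝ≥0, (t : ℝ≥0∞) * (μG {x | (t : ℝ) < |f x|}) ^ (1 / p)

/-- Walsh–Fourier coefficient of an integrable function. -/
def fcoeff (f : G → ℝ) (j : ℕ) : ℝ := ∫ x, f x * walsh j x ∂μG

/-- Partial sums of the Walsh–Fourier series of a function. -/
def Sf (f : G → ℝ) (m : ℕ) (x : G) : ℝ := ∑ j ∈ Finset.range m, fcoeff f j * walsh j x

/-- Fejér means of the Walsh–Fourier series of a function. -/
def σf (f : G → ℝ) (n : ℕ) (x : G) : ℝ := (1 / n) * ∑ k ∈ Finset.Icc 1 n, Sf f k x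

/-- The martingale `(S_{2^m} g)_m` generated by a function `g`; used to interpret the
`H_p` norm of a function such as `σ_n F`. -/
def funMart (g : G → ℝ) : ℕ → G → ℝ := fun m => Sf g (2 ^ m)

/-- Modulus of continuity in `H_p`: `ω_{H_p}(1/2^n, F) = ‖F - S_{2^n} F‖_{H_p}`,
where `F - S_{2^n}F` is the martingale with `m`-th term `F_m - S_{min(2^n, 2^m)}F`. -/
def ωHp (p : ℝ) (n : ℕ) (F : ℕ → G → ℝ) : ℝ≥0∞ :=
  HpNorm p (fun m x => F m x - S F (min (2 ^ n) (2 ^ m)) x)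

/-- The a.e. limit of a martingale (as a limsup, which agrees a.e. with the limit
for martingales in `H_p`). -/
def mLim (F : ℕ → G → ℝ) (x : G) : ℝ := Filter.limsup (fun m => F m x) Filter.atTop

/-- The set `E_l := I_{l+1}(e_{l-1} + e_l)`, with the convention
`I_1(e_{-1}+e_0) = I_2(e_0+e_1)` for `l = 0`. -/
def Eset (l : ℕ) : Set G :=
  if l = 0 then cyl 2 (e 0 + e 1) else cyl (l + 1) (e (l - 1) + e l)

/-! Let `N` be such that `n ≤ 2 ^ N ≤ 2 n`. Then `σ_n F` is the convolution of `F_N` and `K_n`,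
both functions of the first `N` coordinates. On such functions
`‖·‖_1 ≤ 2 ^ (N (1 / p - 1)) ‖·‖_p` for `p ≤ 1` (Nikolskii), so convolution is bounded on `L_p`
with the same loss. For `p = 1 / 2` the loss `2 ^ N` is compensated by the factor `1 / n` in
`K_n`: it remains to bound `∫ |n K_n| ^ (1 / 2)` by a multiple of `V(n)`.

Since `w_{2^m-1-j} = w_{2^m-1} w_j`, replacing `r` by its binary complement `2 ^ m - 1 - r` changes
`r K_r`, up to the unimodular factor `w_{2^m-1}`, by `2 ^ m K_{2^m}` and `(r + 1) D_{2^m}`, whose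
`L_{1/2}` norms are bounded; here `p = 1 / 2` is critical, as `∫ |2 ^ m D_{2^m}| ^ (1 / 2) = 1`.
Complementing removes the leading digit and exactly one change of digits, so after as many
complementations as `n` has digit changes one reaches `0`.

For the maximal function, `S_{2^m} σ_n F` is `σ_n F` if `n ≤ 2 ^ m` and otherwise a convex
combination of `σ_{2^m} F` and `F_m` in which `σ_{2^m} F` has weight `2 ^ m / n`. The square
roots of these weights form a geometric series.
-/

section LpPower

variable {α E : Type*} [MeasurableSpace α] {μ : Measure α} [NormedAddCommGroup E] {p : ℝ}

/-- The `p`-th power `∫ ‖f‖ ^ p` of the `L_p` quasi-norm. For `p ≤ 1` it is subadditive, unlike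
the quasi-norm itself. -/
def eLpPow (f : α → E) (p : ℝ) (μ : Measure α) : ℝ≥0∞ := ∫⁻ x, ‖f x‖ₑ ^ p ∂μ

theorem eLpPow_mono {f g : α → E} (hp : 0 ≤ p) (h : ∀ x, ‖f x‖ₑ ≤ ‖g x‖ₑ) :
    eLpPow f p μ ≤ eLpPow g p μ :=
  lintegral_mono fun x => ENNReal.rpow_le_rpow (h x) hp

theorem eLpPow_add_le {f g : α → E} (hf : AEStronglyMeasurable f μ) (hp0 : 0 ≤ p) (hp1 : p ≤ 1) :
    eLpPow (fun x => f x + g x) p μ ≤ eLpPow f p μ + eLpPow g p μ :=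
  calc ∫⁻ x, ‖f x + g x‖ₑ ^ p ∂μ
    _ ≤ ∫⁻ x, ‖f x‖ₑ ^ p + ‖g x‖ₑ ^ p ∂μ := lintegral_mono fun _ =>
        (ENNReal.rpow_le_rpow (enorm_add_le _ _) hp0).trans
          (ENNReal.rpow_add_le_add_rpow _ _ hp0 hp1)
    _ = _ := lintegral_add_left' (hf.enorm.pow_const p) _

theorem eLpPow_sub_le {f g : α → E} (hf : AEStronglyMeasurable f μ) (hp0 : 0 ≤ p) (hp1 : p ≤ 1) :
    eLpPow (fun x => f x - g x) p μ ≤ eLpPow f p μ + eLpPow g p μ := by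
  simpa only [eLpPow, sub_eq_add_neg, enorm_neg] using
    eLpPow_add_le (g := fun x => -g x) hf hp0 hp1

theorem eLpPow_const_mul (c : ℝ) (f : α → ℝ) (hp : 0 ≤ p) :
    eLpPow (fun x => c * f x) p μ = ‖c‖ₑ ^ p * eLpPow f p μ := by
  simp only [eLpPow, enorm_mul, ENNReal.mul_rpow_of_nonneg _ _ hp]
  exact lintegral_const_mul' _ _ (ENNReal.rpow_ne_top_of_nonneg hp enorm_ne_top)

theorem lintegral_rpow_le_of_forall_rpow_le {h : α → ℝ≥0∞} {A : ℝ≥0∞} (hh : AEMeasurable h μ)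
    (hp0 : 0 < p) (hp1 : p ≤ 1) (hA : ∀ x, h x ^ p ≤ A) :
    (∫⁻ x, h x ∂μ) ^ p ≤ A ^ (1 - p) * (∫⁻ x, h x ^ p ∂μ) ^ p := by
  have hq : 0 ≤ (1 - p) / p := div_nonneg (sub_nonneg.2 hp1) hp0.le
  have h_le : ∀ x, h x ≤ A ^ ((1 - p) / p) * h x ^ p := fun x =>
    calc h x = (h x ^ p) ^ ((1 - p) / p) * h x ^ p := by
          rw [← ENNReal.rpow_mul, mul_div_cancel₀ _ hp0.ne',
            ← ENNReal.rpow_add_of_nonneg _ _ (sub_nonneg.2 hp1) hp0.le, sub_add_cancel,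
            ENNReal.rpow_one]
      _ ≤ _ := mul_le_mul_left (ENNReal.rpow_le_rpow (hA x) hq) _
  calc (∫⁻ x, h x ∂μ) ^ p
    _ ≤ (∫⁻ x, A ^ ((1 - p) / p) * h x ^ p ∂μ) ^ p :=
        ENNReal.rpow_le_rpow (lintegral_mono h_le) hp0.le
    _ = _ := by
        rw [lintegral_const_mul'' _ (hh.pow_const p), ENNReal.mul_rpow_of_nonneg _ _ hp0.le,
          ← ENNReal.rpow_mul, div_mul_cancel₀ _ hp0.ne']

end LpPower

theorem lintegral_lintegral_mul_comp_add {H : Type*} [AddGroup H] [MeasurableSpace H]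
    [MeasurableAdd₂ H] {μ : Measure H} [SFinite μ] [μ.IsAddRightInvariant] {u v : H → ℝ≥0∞}
    (hu : Measurable u) (hv : Measurable v) :
    ∫⁻ x, ∫⁻ y, u y * v (x + y) ∂μ ∂μ = (∫⁻ y, u y ∂μ) * ∫⁻ x, v x ∂μ := by
  rw [lintegral_lintegral_swap (by fun_prop), ← lintegral_mul_const _ hu]
  refine lintegral_congr fun y => ?_
  rw [lintegral_const_mul _ (by fun_prop), lintegral_add_right_eq_self]

theorem continuous_of_dependsOn {ι β : Type*} {X : ι → Type*} [∀ i, TopologicalSpace (X i)]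
    [∀ i, DiscreteTopology (X i)] [TopologicalSpace β] {f : (∀ i, X i) → β} {s : Set ι}
    (hf : DependsOn f s) (hs : s.Finite) : Continuous f := by
  refine ((IsLocallyConstant.iff_eventually_eq f).2 fun x => ?_).continuous
  filter_upwards [(isOpen_set_pi hs fun i _ => isOpen_discrete {x i}).mem_nhds fun i _ => rfl]
    with y hy
  exact hf hy

theorem geom_sum_two_rpow_neg_half_le (m : ℕ) :
    ∑ j ∈ Finset.range m, ((2 : ℝ≥0∞) ^ (-(1 / 2) : ℝ)) ^ j ≤ 4 := by
  set q : ℝ≥0∞ := 2 ^ (-(1 / 2) : ℝ)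
  have hq : q ≤ 1 := ENNReal.rpow_le_one_of_one_le_of_neg (by norm_num) (by norm_num)
  have hq_sq : q * q = 2⁻¹ := by
    rw [← ENNReal.rpow_add _ _ (by norm_num) (by norm_num), ← ENNReal.rpow_neg_one]
    norm_num
  induction m using Nat.twoStepInduction with
  | zero => simp
  | one => simp
  | more m ih _ =>
    calc ∑ j ∈ Finset.range (m + 2), q ^ j
      _ = q * q * ∑ j ∈ Finset.range m, q ^ j + q + 1 := by simp only [geom_sum_succ]; ring
      _ ≤ 2⁻¹ * (2 * 2) + 1 + 1 := by rw [hq_sq]; gcongr; exact ih.trans_eq (by norm_num)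
      _ = 4 := by
        rw [ENNReal.inv_mul_cancel_left (by norm_num) (by norm_num)]; norm_num


section DyadicGroup

instance : μG.IsAddHaarMeasure := by unfold μG; infer_instance

instance : IsProbabilityMeasure μG := ⟨Measure.addHaarMeasure_self⟩

theorem integrable_of_continuous {f : G → ℝ} (hf : Continuous f) : Integrable f μG :=
  hf.integrable_of_hasCompactSupport (.of_compactSpace f)

theorem apply_add_e {β : Type*} {m t : ℕ} {f : G → β} (hf : DependsOn f (Set.Iio m))
    (ht : m ≤ t) (x : G) : f (x + e t) = f x :=
  hf fun k hk => by simp [e, (lt_of_lt_of_le hk ht).ne]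

theorem update_add_one (x : G) (t : ℕ) : Function.update x t (x t + 1) = x + e t := by
  funext k
  rcases eq_or_ne k t with rfl | h
  · simp [e]
  · simp [e, h]

theorem rade_add (k : ℕ) (x y : G) : rade k (x + y) = rade k x * rade k y := by
  rw [rade, rade, rade, ← pow_add, Pi.add_apply, ZMod.val_add, ← neg_one_pow_eq_pow_mod_two]

theorem rade_eq_one_or_neg_one (k : ℕ) (x : G) : rade k x = 1 ∨ rade k x = -1 :=
  neg_one_pow_eq_or ℝ _

theorem rade_eq_ite (k : ℕ) (x : G) : rade k x = if x k = 0 then 1 else -1 := by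
  have h : ∀ a : ZMod 2, a = 0 ∨ a = 1 := by decide
  rcases h (x k) with h | h <;> simp [rade, h, ZMod.val_one]

theorem rade_e (k t : ℕ) : rade k (e t) = if k = t then -1 else 1 := by
  by_cases h : k = t <;> simp [rade_eq_ite, e, h]

@[fun_prop]
theorem continuous_rade (k : ℕ) : Continuous (rade k) :=
  continuous_of_dependsOn (s := {k}) (fun x y h => by simp only [rade, h k rfl])
    (Set.finite_singleton k)

theorem eLpPow_one_add_rade_mul {p : ℝ} {m : ℕ} {f : G → ℝ} (hf : DependsOn f (Set.Iio m))
    (hp : 0 < p) :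
    eLpPow (fun x => (1 + rade m x) * f x) p μG = 2 ^ (p - 1) * eLpPow f p μG := by
  have hc : Continuous f := continuous_of_dependsOn hf (Set.finite_Iio m)
  have h_enorm_two : ‖(2 : ℝ)‖ₑ = 2 := by simp [enorm_eq_nnnorm]
  have h_two_mul : 2 * eLpPow (fun x => (1 + rade m x) * f x) p μG = 2 ^ p * eLpPow f p μG :=
    calc 2 * eLpPow (fun x => (1 + rade m x) * f x) p μG
      _ = ∫⁻ x, ‖(1 + rade m x) * f x‖ₑ ^ p ∂μG
            + ∫⁻ x, ‖(1 + rade m (x + e m)) * f (x + e m)‖ₑ ^ p ∂μG := by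
          rw [lintegral_add_right_eq_self fun x => ‖(1 + rade m x) * f x‖ₑ ^ p, two_mul, eLpPow]
      _ = ∫⁻ x, ‖(1 + rade m x) * f x‖ₑ ^ p + ‖(1 - rade m x) * f x‖ₑ ^ p ∂μG := by
          simp only [rade_add, rade_e, apply_add_e hf le_rfl, if_true, mul_neg_one,
            ← sub_eq_add_neg]
          rw [lintegral_add_left (by fun_prop)]
      _ = ∫⁻ x, 2 ^ p * ‖f x‖ₑ ^ p ∂μG := by
          refine lintegral_congr fun x => ?_
          rcases rade_eq_one_or_neg_one m x with h | h <;>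
            norm_num [h, enorm_mul, h_enorm_two, ENNReal.mul_rpow_of_nonneg _ _ hp.le, hp]
      _ = _ := lintegral_const_mul _ (by fun_prop)
  refine (ENNReal.mul_right_inj two_ne_zero ofNat_ne_top).1 (h_two_mul.trans ?_)
  rw [← mul_assoc]
  nth_rw 2 [← ENNReal.rpow_one 2]
  rw [← ENNReal.rpow_add _ _ two_ne_zero ofNat_ne_top, add_sub_cancel]

end DyadicGroup

section Walsh

theorem walsh_eq_prod {n M : ℕ} (h : n < 2 ^ M) (x : G) :
    walsh n x = ∏ k ∈ Finset.range M, if n.testBit k then rade k x else 1 := by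
  have h_extend : ∀ {a b : ℕ}, n < 2 ^ a → a ≤ b →
      (∏ k ∈ Finset.range a, if n.testBit k then rade k x else 1) =
        ∏ k ∈ Finset.range b, if n.testBit k then rade k x else 1 := by
    intro a b ha hab
    refine Finset.prod_subset (Finset.range_mono hab) fun k _ hk => if_neg ?_
    rw [Nat.testBit_eq_false_of_lt (ha.trans_le (Nat.pow_le_pow_right two_pos (by simpa using hk)))]
    exact Bool.false_ne_true
  have hn : n < 2 ^ (n + 1) := Nat.lt_two_pow_self.trans (Nat.pow_lt_pow_succ one_lt_two)
  rw [walsh, h_extend hn (le_max_left _ M), ← h_extend h (le_max_right _ M)]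

theorem walsh_zero (x : G) : walsh 0 x = 1 := by simp [walsh]

theorem walsh_add (n : ℕ) (x y : G) : walsh n (x + y) = walsh n x * walsh n y := by
  simp only [walsh, ← Finset.prod_mul_distrib]
  exact Finset.prod_congr rfl fun k _ => by split_ifs <;> simp [rade_add]

theorem walsh_mul_self (n : ℕ) (x : G) : walsh n x * walsh n x = 1 := by
  rw [walsh, ← Finset.prod_mul_distrib]
  refine Finset.prod_eq_one fun k _ => ?_
  rcases rade_eq_one_or_neg_one k x with h | h <;> split_ifs <;> simp [h]

theorem enorm_walsh (n : ℕ) (x : G) : ‖walsh n x‖ₑ = 1 := by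
  rcases mul_self_eq_one_iff.1 (walsh_mul_self n x) with h | h <;> simp [h]

theorem walsh_e (n t : ℕ) : walsh n (e t) = if n.testBit t then -1 else 1 := by
  have hn : n < 2 ^ (n + t + 1) :=
    Nat.lt_two_pow_self.trans_le (Nat.pow_le_pow_right two_pos (by omega))
  simp only [walsh_eq_prod hn, rade_e]
  rw [Finset.prod_eq_single_of_mem t (by simp) fun k _ hk => by simp [hk]]
  simp

theorem dependsOn_walsh {n M : ℕ} (h : n < 2 ^ M) : DependsOn (walsh n) (Set.Iio M) := by
  intro x y hxy
  simp only [walsh_eq_prod h]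
  exact Finset.prod_congr rfl fun k hk => by simp only [rade, hxy k (Finset.mem_range.1 hk)]

@[fun_prop]
theorem continuous_walsh (n : ℕ) : Continuous (walsh n) :=
  continuous_of_dependsOn (dependsOn_walsh Nat.lt_two_pow_self) (Set.finite_Iio n)

theorem walsh_two_pow_add {m k : ℕ} (h : k < 2 ^ m) (x : G) :
    walsh (2 ^ m + k) x = rade m x * walsh k x := by
  rw [walsh_eq_prod (M := m + 1) (by rw [pow_succ]; omega), walsh_eq_prod h,
    Finset.prod_range_succ, Nat.testBit_two_pow_add_eq, Nat.testBit_eq_false_of_lt h, mul_comm]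
  congr 1
  exact Finset.prod_congr rfl fun i hi => by
    rw [Nat.testBit_two_pow_add_gt (Finset.mem_range.1 hi)]

theorem walsh_two_pow_sub_succ {m j : ℕ} (h : j < 2 ^ m) (x : G) :
    walsh (2 ^ m - (j + 1)) x = walsh (2 ^ m - 1) x * walsh j x := by
  rw [walsh_eq_prod (M := m) (by omega), walsh_eq_prod (M := m) (n := 2 ^ m - 1) (by omega),
    walsh_eq_prod h, ← Finset.prod_mul_distrib]
  refine Finset.prod_congr rfl fun i hi => ?_
  rw [Nat.testBit_two_pow_sub_succ h, Nat.testBit_two_pow_sub_one]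
  rcases rade_eq_one_or_neg_one i x with hr | hr <;> cases j.testBit i <;>
    simp [Finset.mem_range.1 hi, hr]

theorem integral_walsh_mul_walsh (i j : ℕ) :
    ∫ x, walsh i x * walsh j x ∂μG = if i = j then 1 else 0 := by
  split_ifs with h
  · subst h
    simp [walsh_mul_self]
  · obtain ⟨t, ht⟩ := Nat.exists_testBit_ne_of_ne h
    have h_neg : ∀ x, walsh i (x + e t) * walsh j (x + e t) = -(walsh i x * walsh j x) := by
      intro x
      rw [walsh_add, walsh_add, walsh_e, walsh_e]
      cases hi : i.testBit t <;> cases hj : j.testBit t <;> simp_all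
    have h_shift := integral_add_right_eq_self (μ := μG) (fun x => walsh i x * walsh j x) (e t)
    simp only [h_neg, integral_neg] at h_shift
    linarith

end Walsh

section Kernels

theorem dependsOn_D {k m : ℕ} (h : k ≤ 2 ^ m) : DependsOn (D k) (Set.Iio m) := fun _ _ hxy =>
  Finset.sum_congr rfl fun _ hj => dependsOn_walsh ((Finset.mem_range.1 hj).trans_le h) hxy

@[fun_prop]
theorem continuous_D (k : ℕ) : Continuous (D k) := by unfold D; fun_prop

theorem D_two_pow_add {m k : ℕ} (h : k ≤ 2 ^ m) (x : G) :
    D (2 ^ m + k) x = D (2 ^ m) x + rade m x * D k x := by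
  rw [D, Finset.sum_range_add, D, D, Finset.mul_sum]
  exact congrArg _ (Finset.sum_congr rfl fun j hj =>
    walsh_two_pow_add ((Finset.mem_range.1 hj).trans_le h) x)

theorem D_two_pow_succ (m : ℕ) (x : G) :
    D (2 ^ (m + 1)) x = (1 + rade m x) * D (2 ^ m) x := by
  rw [pow_succ, mul_two, D_two_pow_add le_rfl]; ring

theorem D_two_pow_sub {m k : ℕ} (h : k ≤ 2 ^ m) (x : G) :
    D (2 ^ m - k) x = D (2 ^ m) x - walsh (2 ^ m - 1) x * D k x := by
  induction k with
  | zero => simp [D]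
  | succ k ih =>
    have h_succ : D (2 ^ m - k) x = D (2 ^ m - (k + 1)) x + walsh (2 ^ m - (k + 1)) x := by
      rw [show 2 ^ m - k = 2 ^ m - (k + 1) + 1 by omega, D, Finset.sum_range_succ, D]
    have h_last : D (k + 1) x = D k x + walsh k x := Finset.sum_range_succ _ _
    rw [h_last, mul_add, ← walsh_two_pow_sub_succ h]
    linarith [ih (by omega)]

theorem D_two_pow (m : ℕ) (x : G) : D (2 ^ m) x = ∏ k ∈ Finset.range m, (1 + rade k x) := by
  induction m with
  | zero => simp [D, walsh_zero]
  | succ m ih => rw [D_two_pow_succ, Finset.prod_range_succ, ih, mul_comm]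

theorem enorm_D_le (n : ℕ) (x : G) : ‖D n x‖ₑ ≤ n :=
  (enorm_sum_le _ _).trans_eq (by simp [enorm_walsh])

theorem integral_D {n : ℕ} (hn : n ≠ 0) : ∫ x, D n x ∂μG = 1 := by
  have h := fun j => integral_walsh_mul_walsh j 0
  simp only [walsh_zero, mul_one] at h
  unfold D
  rw [integral_finsetSum _ fun j _ => integrable_of_continuous (by fun_prop)]
  simp [h, Nat.pos_iff_ne_zero, hn]

theorem integral_mul_D_two_pow {m : ℕ} {f : G → ℝ} (hf : DependsOn f (Set.Iio m)) (x : G) :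
    ∫ y, f y * D (2 ^ m) (x + y) ∂μG = f x := by
  have h_eq : ∀ y, f y * D (2 ^ m) (x + y) = f x * D (2 ^ m) (x + y) := by
    intro y
    by_cases hxy : ∀ k < m, x k = y k
    · rw [hf fun k hk => hxy k hk]
    · push Not at hxy
      obtain ⟨k, hk, hne⟩ := hxy
      have h_rade : rade k (x + y) = -1 := by
        rw [rade_eq_ite, if_neg]
        rwa [Pi.add_apply, CharTwo.add_eq_zero]
      rw [D_two_pow, Finset.prod_eq_zero (Finset.mem_range.2 hk) (by rw [h_rade, add_neg_cancel]),
        mul_zero, mul_zero]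
  simp only [h_eq, integral_const_mul]
  rw [integral_add_left_eq_self (μ := μG) (D (2 ^ m)) x, integral_D (by positivity), mul_one]

theorem eLpPow_D_two_pow {p : ℝ} (hp : 0 < p) (m : ℕ) :
    eLpPow (D (2 ^ m)) p μG = (2 ^ (p - 1)) ^ m := by
  induction m with
  | zero => simp [eLpPow, D, walsh_zero]
  | succ m ih =>
    rw [funext (D_two_pow_succ m), eLpPow_one_add_rade_mul (dependsOn_D le_rfl) hp, ih, pow_succ']

theorem eLpPow_const_mul_D_two_pow_le {c : ℝ} {m : ℕ} (hc : |c| ≤ 2 ^ m) :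
    eLpPow (fun x => c * D (2 ^ m) x) (1 / 2) μG ≤ 1 := by
  have hc' : ‖c‖ₑ ≤ 2 ^ m := by
    rw [Real.enorm_eq_ofReal_abs]
    exact (ENNReal.ofReal_le_ofReal hc).trans_eq (by simp [ENNReal.ofReal_pow])
  rw [eLpPow_const_mul _ _ (by norm_num), eLpPow_D_two_pow (by norm_num)]
  calc ‖c‖ₑ ^ (1 / 2 : ℝ) * (2 ^ (1 / 2 - 1 : ℝ)) ^ m
    _ ≤ (2 ^ m) ^ (1 / 2 : ℝ) * (2 ^ (1 / 2 - 1 : ℝ)) ^ m := by gcongr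
    _ = (2 ^ (1 / 2 : ℝ) * 2 ^ (1 / 2 - 1 : ℝ)) ^ m := by
        rw [mul_pow, ← ENNReal.rpow_natCast_mul, ← ENNReal.rpow_mul_natCast 2 (1 / 2),
          mul_comm (m : ℝ)]
    _ = 1 := by
        rw [← ENNReal.rpow_add _ _ two_ne_zero ofNat_ne_top]; norm_num

/-- The sum `n K_n = ∑_{k=1}^n D_k` of Dirichlet kernels. Unlike the Fejér kernel `K_n`, it
satisfies recursions in `n` with integer coefficients. -/
def fejerSum (n : ℕ) (x : G) : ℝ := ∑ k ∈ Finset.Icc 1 n, D k x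

theorem fejerSum_succ (n : ℕ) (x : G) : fejerSum (n + 1) x = fejerSum n x + D (n + 1) x :=
  Finset.sum_Icc_succ_top (by omega) _

theorem dependsOn_fejerSum {n m : ℕ} (h : n ≤ 2 ^ m) : DependsOn (fejerSum n) (Set.Iio m) :=
  fun _ _ hxy => Finset.sum_congr rfl fun _ hk =>
    dependsOn_D ((Finset.mem_Icc.1 hk).2.trans h) hxy

@[fun_prop]
theorem continuous_fejerSum (n : ℕ) : Continuous (fejerSum n) := by unfold fejerSum; fun_prop

theorem fejerSum_two_pow_add {m k : ℕ} (h : k ≤ 2 ^ m) (x : G) :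
    fejerSum (2 ^ m + k) x = fejerSum (2 ^ m) x + k * D (2 ^ m) x + rade m x * fejerSum k x := by
  induction k with
  | zero => simp [fejerSum]
  | succ k ih =>
    rw [← add_assoc, fejerSum_succ, fejerSum_succ, ih (by omega), add_assoc (2 ^ m),
      D_two_pow_add h]
    push_cast
    ring

theorem fejerSum_two_pow_sub_succ {m r : ℕ} (h : r < 2 ^ m) (x : G) :
    fejerSum (2 ^ m - (r + 1)) x =
      fejerSum (2 ^ m) x - (r + 1) * D (2 ^ m) x + walsh (2 ^ m - 1) x * fejerSum r x := by
  have h_step : ∀ s < 2 ^ m,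
      fejerSum (2 ^ m - s) x = fejerSum (2 ^ m - (s + 1)) x + D (2 ^ m - s) x := by
    intro s hs
    rw [← Nat.sub_add_cancel (Nat.sub_pos_of_lt hs), Nat.sub_sub, fejerSum_succ]
  induction r with
  | zero =>
    have h_zero : fejerSum 0 x = 0 := by simp [fejerSum]
    rw [← Nat.sub_zero (2 ^ m), h_step 0 h, h_zero, Nat.sub_zero]
    push_cast
    ring
  | succ r ih =>
    have h_succ := h_step (r + 1) h
    rw [ih (by omega), D_two_pow_sub h.le] at h_succ
    rw [fejerSum_succ]
    push_cast
    linarith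

theorem eLpPow_fejerSum_two_pow_le (m : ℕ) : eLpPow (fejerSum (2 ^ m)) (1 / 2) μG ≤ 4 := by
  refine le_trans ?_ (geom_sum_two_rpow_neg_half_le (m + 1))
  induction m with
  | zero => simp [fejerSum, eLpPow, D, walsh_zero]
  | succ m ih =>
    have h_double : fejerSum (2 ^ (m + 1)) = fun x =>
        (1 + rade m x) * fejerSum (2 ^ m) x + (2 ^ m : ℝ) * D (2 ^ m) x := by
      funext x
      rw [pow_succ, mul_two, fejerSum_two_pow_add le_rfl]
      push_cast
      ring
    rw [h_double, geom_sum_succ]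
    refine (eLpPow_add_le (by fun_prop) (by norm_num) (by norm_num)).trans (add_le_add ?_ ?_)
    · rw [eLpPow_one_add_rade_mul (dependsOn_fejerSum le_rfl) (by norm_num)]
      rw [show (1 / 2 - 1 : ℝ) = -(1 / 2) by norm_num]
      gcongr
    · exact eLpPow_const_mul_D_two_pow_le (abs_of_pos (by positivity)).le

theorem eLpPow_fejerSum_two_pow_sub_succ_le {m r : ℕ} (h : r < 2 ^ m) :
    eLpPow (fejerSum (2 ^ m - (r + 1))) (1 / 2) μG ≤ 5 + eLpPow (fejerSum r) (1 / 2) μG :=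
  calc eLpPow (fejerSum (2 ^ m - (r + 1))) (1 / 2) μG
    _ ≤ eLpPow (fejerSum (2 ^ m)) (1 / 2) μG
        + eLpPow (fun x => ((r : ℝ) + 1) * D (2 ^ m) x) (1 / 2) μG
        + eLpPow (fun x => walsh (2 ^ m - 1) x * fejerSum r x) (1 / 2) μG := by
      rw [funext (fejerSum_two_pow_sub_succ h)]
      refine (eLpPow_add_le (by fun_prop) (by norm_num) (by norm_num)).trans ?_
      gcongr
      exact eLpPow_sub_le (by fun_prop) (by norm_num) (by norm_num)
    _ ≤ 4 + 1 + eLpPow (fejerSum r) (1 / 2) μG := by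
      gcongr
      · exact eLpPow_fejerSum_two_pow_le m
      · refine eLpPow_const_mul_D_two_pow_le ?_
        rw [abs_of_nonneg (by positivity)]
        exact_mod_cast h
      · exact eLpPow_mono (by norm_num) fun x => by rw [enorm_mul, enorm_walsh, one_mul]
    _ = _ := by norm_num

/-- The number of `k < m` at which the binary digits `n_k` and `n_{k+1}` differ. -/
def digitChanges (n m : ℕ) : ℕ :=
  Finset.card {k ∈ Finset.range m | n.testBit k ≠ n.testBit (k + 1)}

theorem digitChanges_succ (n m : ℕ) : digitChanges n (m + 1) =
    digitChanges n m + if n.testBit m ≠ n.testBit (m + 1) then 1 else 0 := by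
  simp only [digitChanges, Finset.card_filter, Finset.sum_range_succ]

theorem digitChanges_two_pow_sub_succ {n m : ℕ} (h : n < 2 ^ m) :
    digitChanges (2 ^ (m + 1) - (n + 1)) (m + 1) = digitChanges n m + 1 := by
  have h' : n < 2 ^ (m + 1) := h.trans (Nat.pow_lt_pow_succ one_lt_two)
  rw [digitChanges_succ, digitChanges, digitChanges]
  congr 1
  · refine congrArg _ (Finset.filter_congr fun k hk => ?_)
    have hk := Finset.mem_range.1 hk
    simp [Nat.testBit_two_pow_sub_succ h', hk, hk.trans m.lt_succ_self]
  · simp [Nat.testBit_two_pow_sub_succ h', Nat.testBit_eq_false_of_lt h]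

theorem eLpPow_fejerSum_le_digitChanges {n m : ℕ} (h : n < 2 ^ m) :
    eLpPow (fejerSum n) (1 / 2) μG ≤ 5 * digitChanges n m := by
  induction m generalizing n with
  | zero =>
    obtain rfl : n = 0 := by simpa using h
    simp [fejerSum, eLpPow]
  | succ m ih =>
    rcases lt_or_ge n (2 ^ m) with h_lt | h_ge
    · refine (ih h_lt).trans ?_
      rw [digitChanges_succ]
      gcongr
      exact Nat.le_add_right _ _
    · obtain ⟨r, hr, rfl⟩ : ∃ r < 2 ^ m, n = 2 ^ (m + 1) - (r + 1) :=
        ⟨2 ^ (m + 1) - (n + 1), by omega, by omega⟩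
      calc eLpPow (fejerSum (2 ^ (m + 1) - (r + 1))) (1 / 2) μG
        _ ≤ 5 + eLpPow (fejerSum r) (1 / 2) μG := eLpPow_fejerSum_two_pow_sub_succ_le (by omega)
        _ ≤ 5 + 5 * digitChanges r m := by gcongr; exact ih hr
        _ = _ := by rw [digitChanges_two_pow_sub_succ hr]; push_cast; ring

theorem digitChanges_le_V (n : ℕ) : digitChanges n (n + 1) ≤ V n := by
  rw [V, digitChanges, Finset.card_filter, ← Finset.Ico_succ_right_eq_Icc, Nat.succ_eq_succ,
    Finset.sum_Ico_eq_sum_range]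
  simp [add_comm 1, ne_comm]

theorem eLpPow_fejerSum_le (n : ℕ) : eLpPow (fejerSum n) (1 / 2) μG ≤ 5 * V n :=
  calc eLpPow (fejerSum n) (1 / 2) μG
    _ ≤ 5 * digitChanges n (n + 1) := eLpPow_fejerSum_le_digitChanges
        (Nat.lt_two_pow_self.trans (Nat.pow_lt_pow_succ one_lt_two))
    _ ≤ 5 * V n := by gcongr; exact digitChanges_le_V n

theorem one_le_V {n : ℕ} (hn : n ≠ 0) : 1 ≤ V n := by
  refine le_trans (Finset.card_pos.2 ?_) (digitChanges_le_V n)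
  obtain ⟨k, hk⟩ := Nat.exists_testBit_ne_of_ne (show n ≠ n / 2 by omega)
  rw [Nat.testBit_div_two] at hk
  refine ⟨k, Finset.mem_filter.2 ⟨Finset.mem_range.2 ?_, hk⟩⟩
  by_contra! h_le
  have h_lt : n < 2 ^ k := Nat.lt_two_pow_self.trans_le (Nat.pow_le_pow_right two_pos (by omega))
  simp [Nat.testBit_eq_false_of_lt h_lt,
    Nat.testBit_eq_false_of_lt (h_lt.trans (Nat.pow_lt_pow_succ one_lt_two))] at hk

end Kernels

section Convolution

variable {N : ℕ} {f g : G → ℝ} {p : ℝ}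

theorem enorm_rpow_le_two_pow_mul_eLpPow (hf : DependsOn f (Set.Iio N)) (hp : 0 ≤ p) (x : G) :
    ‖f x‖ₑ ^ p ≤ 2 ^ N * eLpPow f p μG := by
  have h_rpow : ∀ y, ‖‖f y‖ ^ p‖ₑ = ‖f y‖ₑ ^ p := fun y => by
    rw [Real.enorm_rpow_of_nonneg (norm_nonneg _) hp, enorm_norm]
  have h_dep : DependsOn (fun y => ‖f y‖ ^ p) (Set.Iio N) := fun y z h => by simp only [hf h]
  calc ‖f x‖ₑ ^ p
    _ = ‖∫ y, ‖f y‖ ^ p * D (2 ^ N) (x + y) ∂μG‖ₑ := by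
        rw [integral_mul_D_two_pow h_dep, h_rpow]
    _ ≤ ∫⁻ y, ‖‖f y‖ ^ p * D (2 ^ N) (x + y)‖ₑ ∂μG := enorm_integral_le_lintegral_enorm _
    _ ≤ ∫⁻ y, 2 ^ N * ‖f y‖ₑ ^ p ∂μG := by
        refine lintegral_mono fun y => ?_
        rw [enorm_mul, h_rpow, mul_comm]
        exact mul_le_mul_left ((enorm_D_le _ _).trans_eq (by push_cast; rfl)) _
    _ = _ := lintegral_const_mul' _ _ (by finiteness)

theorem lintegral_enorm_rpow_le (hf : DependsOn f (Set.Iio N)) (hp0 : 0 < p) (hp1 : p ≤ 1) :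
    (∫⁻ x, ‖f x‖ₑ ∂μG) ^ p ≤ (2 ^ N) ^ (1 - p) * eLpPow f p μG := by
  have hc : Continuous f := continuous_of_dependsOn hf (Set.finite_Iio N)
  have hq : 0 ≤ 1 - p := sub_nonneg.2 hp1
  refine (lintegral_rpow_le_of_forall_rpow_le (by fun_prop) hp0 hp1
    (enorm_rpow_le_two_pow_mul_eLpPow hf hp0.le)).trans_eq ?_
  rw [← eLpPow, ENNReal.mul_rpow_of_nonneg _ _ hq, mul_assoc,
    ← ENNReal.rpow_add_of_nonneg _ _ hq hp0.le, sub_add_cancel, ENNReal.rpow_one]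

theorem eLpPow_convolution_le (hf : DependsOn f (Set.Iio N)) (hg : DependsOn g (Set.Iio N))
    (hp0 : 0 < p) (hp1 : p ≤ 1) :
    eLpPow (fun x => ∫ y, f y * g (x + y) ∂μG) p μG ≤
      (2 ^ N) ^ (1 - p) * (eLpPow f p μG * eLpPow g p μG) := by
  have hfc : Continuous f := continuous_of_dependsOn hf (Set.finite_Iio N)
  have hgc : Continuous g := continuous_of_dependsOn hg (Set.finite_Iio N)
  have h_dep : ∀ x, DependsOn (fun y => f y * g (x + y)) (Set.Iio N) := fun x y z h =>
    congrArg₂ (· * ·) (hf h) (hg fun k hk => congrArg (x k + ·) (h k hk))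
  calc eLpPow (fun x => ∫ y, f y * g (x + y) ∂μG) p μG
    _ ≤ ∫⁻ x, (∫⁻ y, ‖f y * g (x + y)‖ₑ ∂μG) ^ p ∂μG := lintegral_mono fun x =>
        ENNReal.rpow_le_rpow (enorm_integral_le_lintegral_enorm _) hp0.le
    _ ≤ ∫⁻ x, (2 ^ N) ^ (1 - p) * eLpPow (fun y => f y * g (x + y)) p μG ∂μG :=
        lintegral_mono fun x => lintegral_enorm_rpow_le (h_dep x) hp0 hp1
    _ = (2 ^ N) ^ (1 - p) * ∫⁻ x, ∫⁻ y, ‖f y‖ₑ ^ p * ‖g (x + y)‖ₑ ^ p ∂μG ∂μG := by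
        rw [lintegral_const_mul' _ _
          (ENNReal.rpow_ne_top_of_nonneg (sub_nonneg.2 hp1) (by finiteness))]
        simp only [eLpPow, enorm_mul, ENNReal.mul_rpow_of_nonneg _ _ hp0.le]
    _ = _ := by
        rw [lintegral_lintegral_mul_comp_add (u := fun y => ‖f y‖ₑ ^ p)
          (v := fun y => ‖g y‖ₑ ^ p) (by fun_prop) (by fun_prop), eLpPow, eLpPow]

end Convolution

section Martingale

variable {F : ℕ → G → ℝ}

theorem IsDyadicMartingale.dependsOn (hF : IsDyadicMartingale F) (n : ℕ) :
    DependsOn (F n) (Set.Iio n) := fun x y h => hF.1 n x y h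

theorem IsDyadicMartingale.continuous (hF : IsDyadicMartingale F) (n : ℕ) : Continuous (F n) :=
  continuous_of_dependsOn (hF.dependsOn n) (Set.finite_Iio n)

theorem IsDyadicMartingale.integral_mul_eq (hF : IsDyadicMartingale F) {m n : ℕ} {g : G → ℝ}
    (hg : DependsOn g (Set.Iio m)) (h : m ≤ n) :
    ∫ x, F n x * g x ∂μG = ∫ x, F m x * g x ∂μG := by
  have hgc : Continuous g := continuous_of_dependsOn hg (Set.finite_Iio m)
  induction n, h using Nat.le_induction with
  | base => rfl
  | succ n hmn ih =>
    have h_int : Integrable (fun x => F (n + 1) x * g x) μG :=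
      integrable_of_continuous ((hF.continuous _).mul hgc)
    have h_avg : ∀ x, F n x * g x =
        (F (n + 1) x * g x + F (n + 1) (x + e n) * g (x + e n)) / 2 := by
      intro x
      rw [hF.2 n x, update_add_one, apply_add_e hg hmn]; ring
    rw [← ih]
    simp only [h_avg, integral_div]
    rw [integral_add h_int (h_int.comp_add_right _),
      integral_add_right_eq_self fun x => F (n + 1) x * g x, add_self_div_two]

theorem IsDyadicMartingale.mcoeff_eq (hF : IsDyadicMartingale F) {j N : ℕ} (h : j < 2 ^ N) :
    mcoeff F j = ∫ x, F N x * walsh j x ∂μG := by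
  have hj : j < 2 ^ (j + 1) := Nat.lt_two_pow_self.trans (Nat.pow_lt_pow_succ one_lt_two)
  rw [mcoeff, ← hF.integral_mul_eq (dependsOn_walsh hj) (le_max_left _ N),
    hF.integral_mul_eq (dependsOn_walsh h) (le_max_right _ _)]

theorem IsDyadicMartingale.S_eq_integral (hF : IsDyadicMartingale F) {k N : ℕ} (h : k ≤ 2 ^ N)
    (x : G) : S F k x = ∫ y, F N y * D k (x + y) ∂μG := by
  have hFc := hF.continuous N
  simp only [D, Finset.mul_sum]
  rw [integral_finsetSum _ fun j _ => integrable_of_continuous (by fun_prop), S]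
  refine Finset.sum_congr rfl fun j hj => ?_
  rw [hF.mcoeff_eq ((Finset.mem_range.1 hj).trans_le h), ← integral_mul_const]
  simp only [walsh_add, mul_assoc, mul_comm (walsh j x)]

theorem IsDyadicMartingale.S_two_pow (hF : IsDyadicMartingale F) (m : ℕ) (x : G) :
    S F (2 ^ m) x = F m x := by
  rw [hF.S_eq_integral le_rfl, integral_mul_D_two_pow (hF.dependsOn m)]

theorem IsDyadicMartingale.σ_eq_integral (hF : IsDyadicMartingale F) {n N : ℕ} (h : n ≤ 2 ^ N)
    (x : G) : σ F n x = ∫ y, F N y * K n (x + y) ∂μG := by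
  have hFc := hF.continuous N
  simp only [K, mul_left_comm _ (1 / (n : ℝ)), integral_const_mul]
  simp only [Finset.mul_sum _ _ (F N _)]
  rw [integral_finsetSum _ fun k _ => integrable_of_continuous (by fun_prop), σ]
  exact congrArg _ (Finset.sum_congr rfl fun k hk =>
    hF.S_eq_integral ((Finset.mem_Icc.1 hk).2.trans h) x)

@[fun_prop]
theorem continuous_S (F : ℕ → G → ℝ) (k : ℕ) : Continuous (S F k) := by unfold S; fun_prop

@[fun_prop]
theorem continuous_σ (F : ℕ → G → ℝ) (n : ℕ) : Continuous (σ F n) := by unfold σ; fun_prop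

theorem fcoeff_S (F : ℕ → G → ℝ) (k j : ℕ) :
    fcoeff (S F k) j = if j < k then mcoeff F j else 0 := by
  simp only [fcoeff, S, Finset.sum_mul, mul_assoc]
  rw [integral_finsetSum _ fun i _ => integrable_of_continuous (by fun_prop)]
  simp [integral_const_mul, integral_walsh_mul_walsh]

theorem Sf_S (F : ℕ → G → ℝ) (k M : ℕ) (x : G) : Sf (S F k) M x = S F (min k M) x := by
  simp only [Sf, fcoeff_S, ite_mul, zero_mul]
  rw [← Finset.sum_filter, S]
  congr 1
  ext j
  simp [and_comm]

theorem Sf_σ (F : ℕ → G → ℝ) (n M : ℕ) (x : G) :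
    Sf (σ F n) M x = (1 / n) * ∑ k ∈ Finset.Icc 1 n, S F (min k M) x := by
  have h_fcoeff : ∀ j, fcoeff (σ F n) j = (1 / n) * ∑ k ∈ Finset.Icc 1 n, fcoeff (S F k) j := by
    intro j
    simp only [fcoeff, σ, mul_assoc, Finset.sum_mul, integral_const_mul]
    rw [integral_finsetSum _ fun k _ => integrable_of_continuous (by fun_prop)]
  simp only [← Sf_S, Sf, h_fcoeff, mul_assoc, Finset.sum_mul, ← Finset.mul_sum]
  rw [Finset.sum_comm]

theorem funMart_σ_of_le (F : ℕ → G → ℝ) {n m : ℕ} (h : n ≤ 2 ^ m) (x : G) :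
    funMart (σ F n) m x = σ F n x := by
  rw [funMart, Sf_σ, σ]
  exact congrArg _ (Finset.sum_congr rfl fun k hk => by
    rw [min_eq_left ((Finset.mem_Icc.1 hk).2.trans h)])

theorem IsDyadicMartingale.funMart_σ_of_lt (hF : IsDyadicMartingale F) {n m : ℕ} (h : 2 ^ m < n)
    (x : G) :
    funMart (σ F n) m x = 2 ^ m / n * σ F (2 ^ m) x + (n - 2 ^ m) / n * F m x := by
  have h_split : ∑ k ∈ Finset.Icc 1 n, S F (min k (2 ^ m)) x =
      ∑ k ∈ Finset.Icc 1 (2 ^ m), S F k x + (n - 2 ^ m) * F m x := by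
    have h_head : ∀ k ∈ Finset.Ico 1 (2 ^ m + 1), S F (min k (2 ^ m)) x = S F k x := fun k hk => by
      rw [min_eq_left (Nat.lt_succ_iff.1 (Finset.mem_Ico.1 hk).2)]
    have h_tail : ∀ k ∈ Finset.Ico (2 ^ m + 1) (n + 1), S F (min k (2 ^ m)) x = F m x :=
      fun k hk => by
        rw [min_eq_right (Nat.le_of_succ_le (Finset.mem_Ico.1 hk).1), hF.S_two_pow]
    simp only [← Finset.Ico_add_one_right_eq_Icc]
    rw [← Finset.sum_Ico_consecutive _ (Nat.le_add_left 1 (2 ^ m)) (Nat.add_le_add_right h.le 1),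
      Finset.sum_congr rfl h_head, Finset.sum_congr rfl h_tail]
    simp [Nat.cast_sub h.le]
  rw [funMart, Sf_σ, h_split, σ]
  push_cast
  field_simp

end Martingale

section MaximalFunction

variable {F : ℕ → G → ℝ} {p : ℝ}

/-- The martingale maximal function `F^* = sup_m |F_m|`, so that `‖F‖_{H_p} = ‖F^*‖_{L_p}`. -/
def maximalFn (F : ℕ → G → ℝ) (x : G) : ℝ≥0∞ := ⨆ m, ‖F m x‖ₑ

theorem hpNorm_half (F : ℕ → G → ℝ) :
    HpNorm (1 / 2) F = (∫⁻ x, maximalFn F x ^ (1 / 2 : ℝ) ∂μG) ^ 2 := by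
  rw [← ENNReal.rpow_natCast, HpNorm, one_div_one_div]
  rfl

theorem maximalFn_rpow_le {x : G} {B : ℝ≥0∞} (hp : 0 < p) (h : ∀ m, ‖F m x‖ₑ ^ p ≤ B) :
    maximalFn F x ^ p ≤ B :=
  (ENNReal.le_rpow_inv_iff hp).1 (iSup_le fun m => (ENNReal.le_rpow_inv_iff hp).2 (h m))

theorem eLpPow_le_lintegral_maximalFn (F : ℕ → G → ℝ) (n : ℕ) (hp : 0 ≤ p) :
    eLpPow (F n) p μG ≤ ∫⁻ x, maximalFn F x ^ p ∂μG :=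
  lintegral_mono fun x => ENNReal.rpow_le_rpow (le_iSup (fun m => ‖F m x‖ₑ) n) hp

theorem IsDyadicMartingale.maximalFn_funMart_σ_rpow_le (hF : IsDyadicMartingale F) (hp0 : 0 < p)
    (hp1 : p ≤ 1) (n : ℕ) (x : G) :
    maximalFn (funMart (σ F n)) x ^ p ≤ ‖σ F n x‖ₑ ^ p +
      (∑ i ∈ Finset.range (Nat.log 2 n + 1), ‖(2 ^ i / n : ℝ) * σ F (2 ^ i) x‖ₑ ^ p +
        maximalFn F x ^ p) := by
  refine maximalFn_rpow_le hp0 fun m => ?_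
  rcases le_or_gt n (2 ^ m) with h | h
  · rw [funMart_σ_of_le F h]
    exact le_self_add
  have h_mem : m ∈ Finset.range (Nat.log 2 n + 1) := Finset.mem_range.2
    ((Nat.pow_lt_pow_iff_right one_lt_two).1 (h.trans (Nat.lt_pow_succ_log_self one_lt_two n)))
  have h_weight : ‖((n - 2 ^ m) / n : ℝ)‖ₑ ≤ 1 := by
    have h_cast : (2 ^ m : ℝ) ≤ n := by exact_mod_cast h.le
    rw [Real.enorm_of_nonneg (div_nonneg (sub_nonneg.2 h_cast) n.cast_nonneg),
      ENNReal.ofReal_le_one]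
    exact div_le_one_of_le₀ (sub_le_self _ (by positivity)) n.cast_nonneg
  have h_second : ‖((n - 2 ^ m) / n : ℝ) * F m x‖ₑ ≤ maximalFn F x := by
    rw [enorm_mul]
    exact (mul_le_of_le_one_left' h_weight).trans (le_iSup (fun m => ‖F m x‖ₑ) m)
  rw [hF.funMart_σ_of_lt h]
  calc ‖(2 ^ m / n : ℝ) * σ F (2 ^ m) x + (n - 2 ^ m) / n * F m x‖ₑ ^ p
    _ ≤ (‖(2 ^ m / n : ℝ) * σ F (2 ^ m) x‖ₑ + maximalFn F x) ^ p :=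
        ENNReal.rpow_le_rpow ((enorm_add_le _ _).trans (by gcongr)) hp0.le
    _ ≤ ‖(2 ^ m / n : ℝ) * σ F (2 ^ m) x‖ₑ ^ p + maximalFn F x ^ p :=
        ENNReal.rpow_add_le_add_rpow _ _ hp0.le hp1
    _ ≤ ∑ i ∈ Finset.range (Nat.log 2 n + 1), ‖(2 ^ i / n : ℝ) * σ F (2 ^ i) x‖ₑ ^ p +
        maximalFn F x ^ p := by
      gcongr
      exact Finset.single_le_sum (f := fun i => ‖(2 ^ i / n : ℝ) * σ F (2 ^ i) x‖ₑ ^ p)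
        (fun _ _ => zero_le) h_mem
    _ ≤ _ := le_add_self

end MaximalFunction

section FejerMeans

variable {F : ℕ → G → ℝ}

theorem IsDyadicMartingale.eLpPow_σ_le (hF : IsDyadicMartingale F) {n N : ℕ} {p : ℝ}
    (h : n ≤ 2 ^ N) (hp0 : 0 < p) (hp1 : p ≤ 1) :
    eLpPow (σ F n) p μG ≤ (2 ^ N) ^ (1 - p) * (eLpPow (F N) p μG * eLpPow (K n) p μG) := by
  have h_dep : DependsOn (K n) (Set.Iio N) := fun x y hxy =>
    congrArg (1 / (n : ℝ) * ·) (dependsOn_fejerSum h hxy)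
  rw [funext (hF.σ_eq_integral h)]
  exact eLpPow_convolution_le (hF.dependsOn N) h_dep hp0 hp1

theorem IsDyadicMartingale.eLpPow_σ_half_le (hF : IsDyadicMartingale F) {n : ℕ} (hn : n ≠ 0) :
    eLpPow (σ F n) (1 / 2) μG ≤
      2 * eLpPow (fejerSum n) (1 / 2) μG * ∫⁻ x, maximalFn F x ^ (1 / 2 : ℝ) ∂μG := by
  set N := Nat.log 2 n + 1
  have h_lt : n < 2 ^ N := Nat.lt_pow_succ_log_self one_lt_two n
  have h_le : 2 ^ N ≤ 2 * n := by
    rw [pow_succ, mul_comm]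
    exact Nat.mul_le_mul_left 2 (Nat.pow_log_le_self 2 hn)
  have h_ratio : (2 : ℝ≥0∞) ^ N * ‖(1 / n : ℝ)‖ₑ ≤ 2 := by
    rw [one_div, enorm_inv (Nat.cast_ne_zero.2 hn), Real.enorm_natCast, ← div_eq_mul_inv]
    exact ENNReal.div_le_of_le_mul (by exact_mod_cast h_le)
  have h_K : eLpPow (K n) (1 / 2) μG =
      ‖(1 / n : ℝ)‖ₑ ^ (1 / 2 : ℝ) * eLpPow (fejerSum n) (1 / 2) μG :=
    eLpPow_const_mul _ _ (by norm_num)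
  calc eLpPow (σ F n) (1 / 2) μG
    _ ≤ (2 ^ N) ^ (1 - 1 / 2 : ℝ) * (eLpPow (F N) (1 / 2) μG * eLpPow (K n) (1 / 2) μG) :=
        hF.eLpPow_σ_le h_lt.le (by norm_num) (by norm_num)
    _ = (2 ^ N * ‖(1 / n : ℝ)‖ₑ) ^ (1 / 2 : ℝ) * eLpPow (fejerSum n) (1 / 2) μG *
        eLpPow (F N) (1 / 2) μG := by
      rw [h_K, ENNReal.mul_rpow_of_nonneg _ _ (by norm_num),
        show (1 - 1 / 2 : ℝ) = 1 / 2 by norm_num]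
      ring
    _ ≤ 2 * eLpPow (fejerSum n) (1 / 2) μG * ∫⁻ x, maximalFn F x ^ (1 / 2 : ℝ) ∂μG := by
      gcongr
      · calc (2 ^ N * ‖(1 / n : ℝ)‖ₑ) ^ (1 / 2 : ℝ)
          _ ≤ 2 ^ (1 / 2 : ℝ) := ENNReal.rpow_le_rpow h_ratio (by norm_num)
          _ ≤ 2 ^ (1 : ℝ) := ENNReal.rpow_le_rpow_of_exponent_le one_le_two (by norm_num)
          _ = 2 := ENNReal.rpow_one 2
      · exact eLpPow_le_lintegral_maximalFn F N (by norm_num)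

theorem sum_enorm_two_pow_div_rpow_half_le {n : ℕ} (hn : n ≠ 0) :
    ∑ i ∈ Finset.range (Nat.log 2 n + 1), ‖(2 ^ i / n : ℝ)‖ₑ ^ (1 / 2 : ℝ) ≤ 4 := by
  rw [← Finset.sum_range_reflect]
  refine (Finset.sum_le_sum fun j hj => ?_).trans (geom_sum_two_rpow_neg_half_le _)
  have hj : j ≤ Nat.log 2 n := Nat.lt_succ_iff.1 (Finset.mem_range.1 hj)
  have h_mul : (2 : ℝ) ^ j * 2 ^ (Nat.log 2 n - j) ≤ n := by
    rw [← pow_add, Nat.add_sub_cancel' hj]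
    exact_mod_cast Nat.pow_log_le_self 2 hn
  have h_ratio : ‖(2 ^ (Nat.log 2 n - j) / n : ℝ)‖ₑ ≤ 2⁻¹ ^ j :=
    calc ‖(2 ^ (Nat.log 2 n - j) / n : ℝ)‖ₑ
      _ ≤ ‖((2 ^ j)⁻¹ : ℝ)‖ₑ := by
        rw [enorm_le_iff_norm_le, Real.norm_of_nonneg (by positivity),
          Real.norm_of_nonneg (by positivity), div_le_iff₀ (by positivity)]
        exact (le_inv_mul_iff₀ (by positivity)).2 h_mul
      _ = 2⁻¹ ^ j := by
        rw [enorm_inv (by positivity), enorm_pow, ENNReal.inv_pow, Real.enorm_of_nonneg zero_le_two,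
          ENNReal.ofReal_ofNat]
  calc ‖(2 ^ (Nat.log 2 n + 1 - 1 - j) / n : ℝ)‖ₑ ^ (1 / 2 : ℝ)
    _ ≤ (2⁻¹ ^ j) ^ (1 / 2 : ℝ) := ENNReal.rpow_le_rpow h_ratio (by norm_num)
    _ = (2 ^ (-(1 / 2) : ℝ)) ^ j := by
        rw [← ENNReal.rpow_natCast_mul, mul_comm, ENNReal.rpow_mul_natCast, ENNReal.inv_rpow,
          ENNReal.rpow_neg]

theorem IsDyadicMartingale.lintegral_maximalFn_funMart_σ_le (hF : IsDyadicMartingale F) {n : ℕ}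
    (hn : n ≠ 0) :
    ∫⁻ x, maximalFn (funMart (σ F n)) x ^ (1 / 2 : ℝ) ∂μG ≤
      43 * V n * ∫⁻ x, maximalFn F x ^ (1 / 2 : ℝ) ∂μG := by
  set J := ∫⁻ x, maximalFn F x ^ (1 / 2 : ℝ) ∂μG
  have h_dyadic : ∀ i, eLpPow (σ F (2 ^ i)) (1 / 2) μG ≤ 8 * J := fun i =>
    calc eLpPow (σ F (2 ^ i)) (1 / 2) μG
      _ ≤ 2 * eLpPow (fejerSum (2 ^ i)) (1 / 2) μG * J := hF.eLpPow_σ_half_le (by positivity)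
      _ ≤ 2 * 4 * J := by gcongr; exact eLpPow_fejerSum_two_pow_le i
      _ = 8 * J := by norm_num
  calc ∫⁻ x, maximalFn (funMart (σ F n)) x ^ (1 / 2 : ℝ) ∂μG
    _ ≤ ∫⁻ x, ‖σ F n x‖ₑ ^ (1 / 2 : ℝ) + (∑ i ∈ Finset.range (Nat.log 2 n + 1),
          ‖(2 ^ i / n : ℝ) * σ F (2 ^ i) x‖ₑ ^ (1 / 2 : ℝ) +
            maximalFn F x ^ (1 / 2 : ℝ)) ∂μG :=
        lintegral_mono (hF.maximalFn_funMart_σ_rpow_le (by norm_num) (by norm_num) n)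
    _ = eLpPow (σ F n) (1 / 2) μG + (∑ i ∈ Finset.range (Nat.log 2 n + 1),
          ‖(2 ^ i / n : ℝ)‖ₑ ^ (1 / 2 : ℝ) * eLpPow (σ F (2 ^ i)) (1 / 2) μG + J) := by
        rw [lintegral_add_left (by fun_prop), lintegral_add_left (by fun_prop),
          lintegral_finsetSum _ fun i _ => by fun_prop]
        simp only [← eLpPow_const_mul _ _ (show (0 : ℝ) ≤ 1 / 2 by norm_num)]
        rfl
    _ ≤ 2 * (5 * V n) * J + (4 * (8 * J) + J) := by
        gcongr
        · exact (hF.eLpPow_σ_half_le hn).trans (by gcongr; exact eLpPow_fejerSum_le n)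
        · refine (Finset.sum_le_sum fun i _ => mul_le_mul_right (h_dyadic i) _).trans ?_
          rw [← Finset.sum_mul]
          gcongr
          exact sum_enorm_two_pow_div_rpow_half_le hn
    _ = (10 * V n + 33 * 1) * J := by ring
    _ ≤ (10 * V n + 33 * V n) * J := by gcongr; exact_mod_cast one_le_V hn
    _ = 43 * V n * J := by ring

end FejerMeans

/-- `‖σ_n F‖_{H_{1/2}} ≤ c V(n)² ‖F‖_{H_{1/2}}`. -/
theorem fejer_Hp_bound_half :
    ∃ C : ℝ≥0, 0 < C ∧ ∀ F : ℕ → G → ℝ, MemHp (1/2) F → ∀ n : ℕ, 1 ≤ n →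
      HpNorm (1/2) (funMart (σ F n)) ≤
        (C : ℝ≥0∞) * (V n : ℝ≥0∞) ^ 2 * HpNorm (1/2) F := by
  refine ⟨43 ^ 2, by positivity, fun F hF n hn => ?_⟩
  calc HpNorm (1 / 2) (funMart (σ F n))
    _ = (∫⁻ x, maximalFn (funMart (σ F n)) x ^ (1 / 2 : ℝ) ∂μG) ^ 2 := hpNorm_half _
    _ ≤ (43 * V n * ∫⁻ x, maximalFn F x ^ (1 / 2 : ℝ) ∂μG) ^ 2 :=
        pow_le_pow_left' (hF.1.lintegral_maximalFn_funMart_σ_le (by omega)) 2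
    _ = _ := by rw [hpNorm_half, mul_pow, mul_pow]; push_cast; rfl
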